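/- With the notation and hypotheses of the context, for every λ ∈ ℂ one has det[X·(λI − Z) − I] = −μ·q(λ), where q(λ) = wᵀ·adjugate(λI − Z)·e and μ = fᵀ·v. -/

import Mathlib

open Matrix

/-!
The commutator relation gives `X (λ - Z) - 1 = (λ - Z) X - e fᵀ`, a rank-one perturbation of a
singular matrix. By the matrix determinant lemma `det (A + u vᵀ) = det A + vᵀ adj(A) u` its
determinant is `-fᵀ adj((λ - Z) X) e = -fᵀ adj(X) adj(λ - Z) e`, which factors through
`adj X = v wᵀ`.
-/

section

variable {m R : Type*} [Fintype m] [DecidableEq m] [CommRing R]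

-- `fromBlocks A U (-V) 1` has determinant `det (A + u vᵀ)`; clear its upper right block `U` by
-- column operations, scaling the last column by `det A` to avoid dividing by it.
theorem det_mul_det_add_vecMulVec (A : Matrix m m R) (u v : m → R) :
    A.det * (A + vecMulVec u v).det = A.det * (A.det + v ⬝ᵥ (A.adjugate *ᵥ u)) := by
  let U := replicateCol Unit u
  let V := replicateRow Unit v
  have bordered_mul : fromBlocks A U (-V) 1 * fromBlocks 1 (-(A.adjugate * U)) 0 (A.det • 1) =
      fromBlocks A 0 (-V) (A.det • 1 + V * A.adjugate * U) := by
    simp [fromBlocks_multiply, ← Matrix.mul_assoc, mul_adjugate, add_comm]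
  have bordered_det : (fromBlocks A U (-V) 1).det = (A + vecMulVec u v).det := by
    rw [det_fromBlocks_one₂₂, Matrix.mul_neg, sub_neg_eq_add, ← vecMulVec_eq]
  have corner_det : (A.det • 1 + V * A.adjugate * U).det = A.det + v ⬝ᵥ (A.adjugate *ᵥ u) := by
    rw [Matrix.mul_assoc, ← replicateCol_mulVec, det_unique]
    simp [V, replicateRow_mul_replicateCol_apply]
  have det_eq := congrArg det bordered_mul
  rw [det_mul, bordered_det, det_fromBlocks_zero₂₁, det_fromBlocks_zero₁₂, corner_det] at det_eq
  simpa [mul_comm] using det_eq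

-- `det A` may be a zero divisor, so cancel it for `t • 1 + A` over `R[t]`, whose determinant is
-- monic, and set `t = 0`.
theorem det_add_vecMulVec (A : Matrix m m R) (u v : m → R) :
    (A + vecMulVec u v).det = A.det + v ⬝ᵥ (A.adjugate *ᵥ u) := by
  let B := charmatrix (-A)
  let evalZero : Polynomial R →+* R := Polynomial.evalRingHom 0
  have map_B : evalZero.mapMatrix B = A := by
    ext i j
    simp [B, evalZero, charmatrix_apply, diagonal_apply, apply_ite]
  have map_C (x : m → R) : evalZero ∘ Polynomial.C ∘ x = x := by
    ext i
    simp [evalZero]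
  have map_update : evalZero.mapMatrix (B + vecMulVec (Polynomial.C ∘ u) (Polynomial.C ∘ v)) =
      A + vecMulVec u v := by
    rw [map_add, map_B]
    ext i j
    simp [evalZero, vecMulVec_apply]
  have det_B_update : (B + vecMulVec (Polynomial.C ∘ u) (Polynomial.C ∘ v)).det =
      B.det + (Polynomial.C ∘ v) ⬝ᵥ (B.adjugate *ᵥ (Polynomial.C ∘ u)) :=
    (charpoly_monic (-A)).isRegular.left (det_mul_det_add_vecMulVec B _ _)
  have map_mulVec : evalZero ∘ (B.adjugate *ᵥ (Polynomial.C ∘ u)) = A.adjugate *ᵥ u := by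
    ext i
    rw [Function.comp_apply, RingHom.map_mulVec, map_C, ← RingHom.mapMatrix_apply,
      RingHom.map_adjugate, map_B]
  have eval_eq := congrArg evalZero det_B_update
  rwa [map_add, RingHom.map_det, RingHom.map_det, map_update, map_B, RingHom.map_dotProduct,
    map_C, map_mulVec] at eval_eq

theorem det_sub_vecMulVec (A : Matrix m m R) (u v : m → R) :
    (A - vecMulVec u v).det = A.det - v ⬝ᵥ (A.adjugate *ᵥ u) := by
  rw [sub_eq_add_neg, ← neg_vecMulVec, det_add_vecMulVec, mulVec_neg, dotProduct_neg,
    ← sub_eq_add_neg]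

theorem det_mul_sub_vecMulVec_of_adjugate_eq_vecMulVec {A X : Matrix m m R} {e f v w : m → R}
    (hdet : X.det = 0) (hvw : X.adjugate = vecMulVec v w) :
    (A * X - vecMulVec e f).det = -((f ⬝ᵥ v) * (w ⬝ᵥ (A.adjugate *ᵥ e))) := by
  rw [det_sub_vecMulVec, det_mul, hdet, mul_zero, zero_sub, adjugate_mul_distrib, hvw,
    ← mulVec_mulVec, vecMulVec_mulVec, op_smul_eq_smul, dotProduct_smul, smul_eq_mul, mul_comm]

theorem det_right_factor_general (X Z : Matrix m m R) (hdet : X.det = 0) (e f v w : m → R)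
    (hef : X * Z - Z * X + 1 = vecMulVec e f) (hvw : X.adjugate = vecMulVec v w) (lam : R) :
    (X * (lam • (1 : Matrix m m R) - Z) - 1).det =
      -((f ⬝ᵥ v) * (w ⬝ᵥ ((lam • (1 : Matrix m m R) - Z).adjugate *ᵥ e))) := by
  have swap_factors : X * (lam • (1 : Matrix m m R) - Z) - 1 =
      (lam • (1 : Matrix m m R) - Z) * X - vecMulVec e f := by
    rw [← hef, mul_sub, sub_mul, mul_smul_comm, smul_mul_assoc, mul_one, one_mul]
    abel
  rw [swap_factors, det_mul_sub_vecMulVec_of_adjugate_eq_vecMulVec hdet hvw]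

end

/-- `det[X·(λI − Z) − I] = −μ·q(λ)` where `q(λ) = wᵀ·adj(λI − Z)·e`
and `μ = fᵀ·v`. -/
theorem det_right_factor (n : ℕ) (hn : 1 ≤ n)
    (X Z : Matrix (Fin n) (Fin n) ℂ)
    (hrank : (X * Z - Z * X + 1).rank = 1)
    (hdet : X.det = 0)
    (e f v w : Fin n → ℂ)
    (hef : X * Z - Z * X + 1 = vecMulVec e f)
    (hvw : X.adjugate = vecMulVec v w)
    (lam : ℂ) :
    (X * (lam • (1 : Matrix (Fin n) (Fin n) ℂ) - Z) - 1).det =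
      -((f ⬝ᵥ v) * (w ⬝ᵥ ((lam • (1 : Matrix (Fin n) (Fin n) ℂ) - Z).adjugate *ᵥ e))) := by
  exact det_right_factor_general X Z hdet e f v w hef hvw lam
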